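/- arXiv:2502.05185 — 2 statements merged into one kernel-verified Lean document; each statement's English description precedes it below -/
import Mathlib

section
/- (Proposition 5, runner-up reinforcement paradox probability under IAC, complete ballots.) The IAC probability, over complete-ballot profiles with total 1, of the event that some candidate W whose first-place total is not strictly smallest among the three candidates demonstrates a reinforcement paradox (a runner-up reinforcement paradox) equals 127/576. -/
/-- A three-candidate complete-ballot profile: numbers of ballots with rankings
A≻B≻C, A≻C≻B, B≻A≻C, B≻C≻A, C≻A≻B, C≻B≻A respectively. -/
structure Profile where
  x1 : ℝ
  x2 : ℝ
  y1 : ℝ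
  y2 : ℝ
  z1 : ℝ
  z2 : ℝ

namespace Profile

def nonneg (p : Profile) : Prop :=
  0 ≤ p.x1 ∧ 0 ≤ p.x2 ∧ 0 ≤ p.y1 ∧ 0 ≤ p.y2 ∧ 0 ≤ p.z1 ∧ 0 ≤ p.z2

instance : Add Profile :=
  ⟨fun p q => ⟨p.x1 + q.x1, p.x2 + q.x2, p.y1 + q.y1, p.y2 + q.y2, p.z1 + q.z1, p.z2 + q.z2⟩⟩

/-- First-place total of candidate A. -/
def X (p : Profile) : ℝ := p.x1 + p.x2
/-- First-place total of candidate B. -/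
def Y (p : Profile) : ℝ := p.y1 + p.y2
/-- First-place total of candidate C. -/
def Z (p : Profile) : ℝ := p.z1 + p.z2
/-- Total vote. -/
def V (p : Profile) : ℝ := p.X + p.Y + p.Z

end Profile

inductive Cand | A | B | C

/-- Candidate `W` wins strictly under IRV in profile `p`. -/
def wins : Cand → Profile → Prop
  | Cand.A, p => p.X > p.Y + p.Z ∨
      (p.Z < p.X ∧ p.Z < p.Y ∧ p.X + p.z1 > p.Y + p.z2) ∨
      (p.Y < p.X ∧ p.Y < p.Z ∧ p.X + p.y1 > p.Z + p.y2)
  | Cand.B, p => p.Y > p.X + p.Z ∨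
      (p.Z < p.Y ∧ p.Z < p.X ∧ p.Y + p.z2 > p.X + p.z1) ∨
      (p.X < p.Y ∧ p.X < p.Z ∧ p.Y + p.x1 > p.Z + p.x2)
  | Cand.C, p => p.Z > p.X + p.Y ∨
      (p.X < p.Z ∧ p.X < p.Y ∧ p.Z + p.x2 > p.Y + p.x1) ∨
      (p.Y < p.Z ∧ p.Y < p.X ∧ p.Z + p.y2 > p.X + p.y1)

/-- Profile `p` demonstrates a reinforcement paradox for candidate `W`: there is a
partition `p = p1 + p2` into profiles with nonnegative entries such that `W` wins
strictly in both `p1` and `p2` but `W` does not win strictly in `p`. -/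
def paradox (W : Cand) (p : Profile) : Prop :=
  ∃ p1 p2 : Profile, p1.nonneg ∧ p2.nonneg ∧ p1 + p2 = p ∧
    wins W p1 ∧ wins W p2 ∧ ¬ wins W p

/-- The simplex of complete-ballot profiles with total 1, parameterized by the
first five coordinates (X1, X2, Y1, Y2, Z1). -/
def T : Set (Fin 5 → ℝ) :=
  {v | (∀ i, 0 ≤ v i) ∧ v 0 + v 1 + v 2 + v 3 + v 4 ≤ 1}

/-- The profile with total 1 associated to a point of `T`, with
`Z2 = 1 - (X1 + X2 + Y1 + Y2 + Z1)`. -/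
noncomputable def profOf (v : Fin 5 → ℝ) : Profile :=
  ⟨v 0, v 1, v 2, v 3, v 4, 1 - (v 0 + v 1 + v 2 + v 3 + v 4)⟩

/-- First-place total of a candidate. -/
def fp : Cand → Profile → ℝ
  | Cand.A, p => p.X
  | Cand.B, p => p.Y
  | Cand.C, p => p.Z

/-- Candidate `W`'s first-place total is strictly smallest among the three. -/
def strictlySmallest (W : Cand) (p : Profile) : Prop :=
  ∀ W' : Cand, W' ≠ W → fp W p < fp W' p

/-- The paradox region in the coordinates
`a = X`, `b = Y`, `e = z1`, `d = y1`, `c = x1` (for `W = A`, last candidate `C`). -/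
def Qp (a b e d c : ℝ) : Prop :=
  0 ≤ c ∧ c ≤ a ∧ 0 ≤ d ∧ d ≤ b ∧ 0 ≤ e ∧ e ≤ 1 - a - b ∧
  1 - a - b < a ∧ 1 - a - b < b ∧ b < a + e ∧ e < 1 / 2 - a ∧ 1 / 2 - a - e < d

lemma Profile.add_def (p q : Profile) : p + q =
    ⟨p.x1 + q.x1, p.x2 + q.x2, p.y1 + q.y1, p.y2 + q.y2, p.z1 + q.z1, p.z2 + q.z2⟩ := rfl

/-- If `A` is in paradox and `C` is strictly last, the profile lies in the region. -/
lemma core_mp (p : Profile) (hp : p.nonneg)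
    (hs : p.x1 + p.x2 + p.y1 + p.y2 + p.z1 + p.z2 = 1)
    (hZX : p.Z < p.X) (hZY : p.Z < p.Y) (hne : p.X + p.z1 ≠ p.Y + p.z2)
    (h : paradox Cand.A p) : Qp p.X p.Y p.z1 p.y1 p.x1 := by
  obtain ⟨q, r, hq, hr, rfl, hwq, hwr, hw⟩ := h
  obtain ⟨q1, q2, q3, q4, q5, q6⟩ := q
  obtain ⟨r1, r2, r3, r4, r5, r6⟩ := r
  simp only [Profile.add_def, Profile.nonneg, wins, Profile.X, Profile.Y, Profile.Z, Qp] at *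
  push Not at hw
  obtain ⟨hw1, hw2, hw3⟩ := hw
  have hw2' := lt_of_le_of_ne (hw2 hZX hZY) hne
  obtain ⟨hq1, hq2, hq3, hq4, hq5, hq6⟩ := hq
  obtain ⟨hr1, hr2, hr3, hr4, hr5, hr6⟩ := hr
  clear hw2 hw3 hne
  rcases hwq with h1 | ⟨h1, h2, h3⟩ | ⟨h1, h2, h3⟩ <;>
  rcases hwr with h4 | ⟨h4, h5, h6⟩ | ⟨h4, h5, h6⟩ <;>
  first
  | (exfalso; linarith)
  | (refine ⟨?_, ?_, ?_, ?_, ?_, ?_, ?_, ?_, ?_, ?_, ?_⟩ <;> linarith)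

lemma core_mpr (p : Profile) (hp : p.nonneg)
    (hs : p.x1 + p.x2 + p.y1 + p.y2 + p.z1 + p.z2 = 1)
    (h : Qp p.X p.Y p.z1 p.y1 p.x1) : paradox Cand.A p := by
  obtain ⟨x1, x2, y1, y2, z1, z2⟩ := p
  simp only [Profile.nonneg, Profile.X, Profile.Y, Profile.Z, Qp] at *
  obtain ⟨h1, h2, h3, h4, h5, h6, h7, h8, h9, h10, h11⟩ := h
  obtain ⟨hx1, hx2, hy1, hy2, hz1, hz2⟩ := hp
  obtain ⟨α, hα1, hα2⟩ : ∃ α, (z2 + y1 + y2 - x1 - x2 - z1) / 2 < α ∧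
      α < min (min y1 z2) (min (y1 + y2 - z1) (x1 + x2 - z1)) := by
    apply exists_between
    simp only [lt_min_iff]
    refine ⟨⟨?_, ?_⟩, ?_, ?_⟩ <;> linarith
  simp only [lt_min_iff] at hα2
  obtain ⟨⟨hα2, hα3⟩, hα4, hα5⟩ := hα2
  obtain ⟨t, ht1, ht2⟩ : ∃ t, max α (z2 - α) < t ∧
      t < min (x1 + x2 - z1) (x1 + x2 + z1 - (y1 + y2) + α) := by
    apply exists_between
    simp only [lt_min_iff, max_lt_iff]
    refine ⟨⟨?_, ?_⟩, ?_, ?_⟩ <;> linarith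
  simp only [lt_min_iff, max_lt_iff] at ht1 ht2
  obtain ⟨ht1, ht3⟩ := ht1
  obtain ⟨ht2, ht4⟩ := ht2
  have hX : 0 < x1 + x2 := by linarith
  have ht0 : 0 < t := by linarith
  have htX : t / (x1 + x2) ≤ 1 := by rw [div_le_one hX]; linarith
  have hl0 : 0 ≤ t / (x1 + x2) := by positivity
  obtain ⟨l, hl⟩ : ∃ l, l = t / (x1 + x2) := ⟨_, rfl⟩
  rw [← hl] at htX hl0
  have hlt : l * x1 + l * x2 = t := by rw [hl]; field_simp
  refine ⟨⟨l * x1, l * x2, α, 0, 0, z2⟩,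
    ⟨(1 - l) * x1, (1 - l) * x2, y1 - α, y2, z1, 0⟩, ?_, ?_, ?_, ?_, ?_, ?_⟩
  · refine ⟨by positivity, by positivity, ?_, le_rfl, le_rfl, hz2⟩
    simp only; linarith
  · have : 0 ≤ 1 - l := by linarith
    refine ⟨by positivity, by positivity, ?_, hy2, hz1, le_rfl⟩
    simp only; linarith
  · simp only [Profile.add_def, Profile.mk.injEq]
    refine ⟨?_, ?_, ?_, ?_, ?_, ?_⟩ <;> ring
  · right; right
    simp only [Profile.X, Profile.Y, Profile.Z]
    refine ⟨?_, ?_, ?_⟩ <;> linarith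
  · right; left
    simp only [Profile.X, Profile.Y, Profile.Z]
    refine ⟨?_, ?_, ?_⟩ <;> linarith
  · simp only [wins, Profile.X, Profile.Y, Profile.Z]
    rintro (h | ⟨h, h', h''⟩ | ⟨h, h', h''⟩) <;> linarith

/-- Swap candidates `A` and `B`. -/
def sAB (p : Profile) : Profile := ⟨p.y1, p.y2, p.x1, p.x2, p.z2, p.z1⟩
/-- Swap candidates `B` and `C`. -/
def sBC (p : Profile) : Profile := ⟨p.x2, p.x1, p.z1, p.z2, p.y1, p.y2⟩

lemma wins_sAB (p : Profile) : wins Cand.A (sAB p) ↔ wins Cand.B p := by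
  simp only [wins, sAB, Profile.X, Profile.Y, Profile.Z]
  constructor <;> rintro (h | ⟨h, h', h''⟩ | ⟨h, h', h''⟩) <;>
  first
  | (left; linarith)
  | (right; left; refine ⟨?_, ?_, ?_⟩ <;> linarith)
  | (right; right; refine ⟨?_, ?_, ?_⟩ <;> linarith)

lemma wins_sBC_A (p : Profile) : wins Cand.A (sBC p) ↔ wins Cand.A p := by
  simp only [wins, sBC, Profile.X, Profile.Y, Profile.Z]
  constructor <;> rintro (h | ⟨h, h', h''⟩ | ⟨h, h', h''⟩) <;>
  first
  | (left; linarith)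
  | (right; left; refine ⟨?_, ?_, ?_⟩ <;> linarith)
  | (right; right; refine ⟨?_, ?_, ?_⟩ <;> linarith)

lemma wins_sBC_B (p : Profile) : wins Cand.B (sBC p) ↔ wins Cand.C p := by
  simp only [wins, sBC, Profile.X, Profile.Y, Profile.Z]
  constructor <;> rintro (h | ⟨h, h', h''⟩ | ⟨h, h', h''⟩) <;>
  first
  | (left; linarith)
  | (right; left; refine ⟨?_, ?_, ?_⟩ <;> linarith)
  | (right; right; refine ⟨?_, ?_, ?_⟩ <;> linarith)

lemma paradox_of_map (s : Profile → Profile) (W W' : Cand) (hinv : ∀ p, s (s p) = p)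
    (hadd : ∀ p q, s (p + q) = s p + s q) (hnn : ∀ p, p.nonneg → (s p).nonneg)
    (hw : ∀ p, wins W (s p) ↔ wins W' p) (p : Profile) :
    paradox W (s p) ↔ paradox W' p := by
  constructor
  · rintro ⟨q, r, hq, hr, h, h1, h2, h3⟩
    refine ⟨s q, s r, hnn _ hq, hnn _ hr, ?_, ?_, ?_, ?_⟩
    · rw [← hadd, h, hinv]
    · rwa [← hw, hinv]
    · rwa [← hw, hinv]
    · rwa [← hw]
  · rintro ⟨q, r, hq, hr, h, h1, h2, h3⟩
    refine ⟨s q, s r, hnn _ hq, hnn _ hr, ?_, ?_, ?_, ?_⟩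
    · rw [← hadd, h]
    · rwa [hw]
    · rwa [hw]
    · rwa [hw]

lemma paradox_sAB (p : Profile) : paradox Cand.A (sAB p) ↔ paradox Cand.B p :=
  paradox_of_map sAB _ _ (fun _ => rfl) (fun _ _ => rfl)
    (fun p ⟨h1, h2, h3, h4, h5, h6⟩ => ⟨h3, h4, h1, h2, h6, h5⟩) wins_sAB p

lemma paradox_sBC_A (p : Profile) : paradox Cand.A (sBC p) ↔ paradox Cand.A p :=
  paradox_of_map sBC _ _ (fun _ => rfl) (fun _ _ => rfl)
    (fun p ⟨h1, h2, h3, h4, h5, h6⟩ => ⟨h2, h1, h5, h6, h3, h4⟩) wins_sBC_A p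

lemma paradox_sBC_B (p : Profile) : paradox Cand.B (sBC p) ↔ paradox Cand.C p :=
  paradox_of_map sBC _ _ (fun _ => rfl) (fun _ _ => rfl)
    (fun p ⟨h1, h2, h3, h4, h5, h6⟩ => ⟨h2, h1, h5, h6, h3, h4⟩) wins_sBC_B p

/-- For nonnegative total-one profiles with no ties, the paradox for `A` with `C` last. -/
def Rp (p : Profile) : Prop := Qp p.X p.Y p.z1 p.y1 p.x1

def generic (p : Profile) : Prop :=
  p.X ≠ p.Y ∧ p.Y ≠ p.Z ∧ p.X ≠ p.Z ∧ p.X + p.z1 ≠ p.Y + p.z2 ∧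
    p.X + p.y1 ≠ p.Z + p.y2 ∧ p.Y + p.x1 ≠ p.Z + p.x2

lemma event_iff_A (p : Profile) (hp : p.nonneg)
    (hs : p.x1 + p.x2 + p.y1 + p.y2 + p.z1 + p.z2 = 1) (hg : generic p) :
    (¬ strictlySmallest Cand.A p ∧ paradox Cand.A p) ↔ (Rp p ∨ Rp (sBC p)) := by
  have hp' : (sBC p).nonneg := by
    obtain ⟨h1, h2, h3, h4, h5, h6⟩ := hp
    exact ⟨h2, h1, h5, h6, h3, h4⟩
  have hs' : (sBC p).x1 + (sBC p).x2 + (sBC p).y1 + (sBC p).y2 + (sBC p).z1 + (sBC p).z2 = 1 := by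
    simp only [sBC]; linarith
  obtain ⟨g1, g2, g3, g4, g5, g6⟩ := hg
  constructor
  · rintro ⟨h1, h2⟩
    have h3 : ¬ (p.X < p.Y ∧ p.X < p.Z) := by
      rintro ⟨h3, h4⟩
      apply h1
      intro W' hW
      cases W'
      · exact absurd rfl hW
      · exact h3
      · exact h4
    by_cases h4 : p.Z < p.Y
    · left
      apply core_mp p hp hs _ h4 g4 h2
      by_contra h5
      exact h3 ⟨lt_of_le_of_lt (not_lt.mp h5) h4, lt_of_le_of_ne (not_lt.mp h5) g3⟩
    · right
      have h4' := lt_of_le_of_ne (not_lt.mp h4) g2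
      refine core_mp _ hp' hs' ?_ h4' ?_ ((paradox_sBC_A p).2 h2)
      · by_contra h5
        have h5' : p.X ≤ p.Y := by
          simp only [sBC, Profile.X, Profile.Y, Profile.Z] at *; linarith
        exact h3 ⟨lt_of_le_of_ne h5' g1, lt_of_le_of_lt h5' h4'⟩
      · intro h
        apply g5
        simp only [sBC, Profile.X, Profile.Y, Profile.Z] at *; linarith
  · rintro (h | h)
    · refine ⟨?_, core_mpr p hp hs h⟩
      intro h1
      have h2 := h1 Cand.C (by simp)
      obtain ⟨-, -, -, -, -, -, h3, -⟩ := h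
      simp only [fp, Profile.X, Profile.Y, Profile.Z] at *
      linarith
    · refine ⟨?_, (paradox_sBC_A p).1 (core_mpr _ hp' hs' h)⟩
      intro h1
      have h2 := h1 Cand.B (by simp)
      obtain ⟨-, -, -, -, -, -, h3, -⟩ := h
      simp only [fp, sBC, Profile.X, Profile.Y, Profile.Z] at *
      linarith

lemma event_iff_B (p : Profile) (hp : p.nonneg)
    (hs : p.x1 + p.x2 + p.y1 + p.y2 + p.z1 + p.z2 = 1) (hg : generic p) :
    (¬ strictlySmallest Cand.B p ∧ paradox Cand.B p) ↔
      (Rp (sAB p) ∨ Rp (sBC (sAB p))) := by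
  have hp' : (sAB p).nonneg := by
    obtain ⟨h1, h2, h3, h4, h5, h6⟩ := hp
    exact ⟨h3, h4, h1, h2, h6, h5⟩
  have h : strictlySmallest Cand.B p ↔ strictlySmallest Cand.A (sAB p) := by
    constructor
    · intro h W' hW
      cases W'
      · exact absurd rfl hW
      · exact h Cand.A (by simp)
      · have := h Cand.C (by simp)
        simp only [fp, sAB, Profile.X, Profile.Y, Profile.Z] at *
        linarith
    · intro h W' hW
      cases W'
      · exact h Cand.B (by simp)
      · exact absurd rfl hW
      · have := h Cand.C (by simp)
        simp only [fp, sAB, Profile.X, Profile.Y, Profile.Z] at *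
        linarith
  rw [h, ← paradox_sAB]
  apply event_iff_A _ hp'
  · simp only [sAB]; linarith
  · obtain ⟨g1, g2, g3, g4, g5, g6⟩ := hg
    simp only [generic, sAB, Profile.X, Profile.Y, Profile.Z] at *
    refine ⟨g1.symm, ?_, ?_, g4.symm, ?_, ?_⟩ <;> intro h
    · apply g3; linarith
    · apply g2; linarith
    · apply g6; linarith
    · apply g5; linarith

lemma event_iff_C (p : Profile) (hp : p.nonneg)
    (hs : p.x1 + p.x2 + p.y1 + p.y2 + p.z1 + p.z2 = 1) (hg : generic p) :
    (¬ strictlySmallest Cand.C p ∧ paradox Cand.C p) ↔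
      (Rp (sAB (sBC p)) ∨ Rp (sBC (sAB (sBC p)))) := by
  have hp' : (sBC p).nonneg := by
    obtain ⟨h1, h2, h3, h4, h5, h6⟩ := hp
    exact ⟨h2, h1, h5, h6, h3, h4⟩
  have h : strictlySmallest Cand.C p ↔ strictlySmallest Cand.B (sBC p) := by
    constructor
    · intro h W' hW
      cases W'
      · have := h Cand.A (by simp)
        simp only [fp, sBC, Profile.X, Profile.Y, Profile.Z] at *
        linarith
      · exact absurd rfl hW
      · exact h Cand.B (by simp)
    · intro h W' hW
      cases W'
      · have := h Cand.A (by simp)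
        simp only [fp, sBC, Profile.X, Profile.Y, Profile.Z] at *
        linarith
      · exact h Cand.C (by simp)
      · exact absurd rfl hW
  rw [h, ← paradox_sBC_B]
  apply event_iff_B _ hp'
  · simp only [sBC]; linarith
  · obtain ⟨g1, g2, g3, g4, g5, g6⟩ := hg
    simp only [generic, sBC, Profile.X, Profile.Y, Profile.Z] at *
    refine ⟨?_, g2.symm, ?_, ?_, ?_, g6.symm ∘ ?_⟩ <;> intro h
    · apply g3; linarith
    · apply g1; linarith
    · apply g5; linarith
    · apply g4; linarith
    · linarith

open MeasureTheory in
/-- Slicing off the first coordinate. -/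
lemma volume_slice {n : ℕ} (S : Set (Fin (n + 1) → ℝ)) (hS : MeasurableSet S) :
    volume S = ∫⁻ t : ℝ, volume {w : Fin n → ℝ | (Fin.cons t w : Fin (n + 1) → ℝ) ∈ S} := by
  have h := volume_preserving_piFinSuccAbove (fun _ : Fin (n + 1) => ℝ) 0
  have h2 := h.symm.measure_preimage hS.nullMeasurableSet
  rw [← h2, Measure.volume_eq_prod, Measure.prod_apply]
  · refine lintegral_congr fun t => ?_
    congr 1
    ext w
    simp only [Set.mem_preimage, Set.mem_ofPred_eq]
    rw [← Fin.insertNth_zero']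
    rfl
  · exact hS.preimage (MeasurableEquiv.measurable _)

open MeasureTheory in
/-- Lower integral of a function which is a quartic on an interval and zero outside. -/
lemma lint_poly (f : ℝ → ENNReal) (l u : ℝ) (g : ℝ → ℝ) (c0 c1 c2 c3 c4 R : ℝ) (hlu : l ≤ u)
    (hf : ∀ x, l < x → x < u → f x = ENNReal.ofReal (g x))
    (h0 : ∀ x, (x < l ∨ u < x) → f x = 0)
    (hnn : ∀ x, l < x → x < u → 0 ≤ g x)
    (hg : ∀ x, g x = c0 + c1 * x + c2 * x ^ 2 + c3 * x ^ 3 + c4 * x ^ 4)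
    (hR : R = (c0 * u + c1 * u ^ 2 / 2 + c2 * u ^ 3 / 3 + c3 * u ^ 4 / 4 + c4 * u ^ 5 / 5)
      - (c0 * l + c1 * l ^ 2 / 2 + c2 * l ^ 3 / 3 + c3 * l ^ 4 / 4 + c4 * l ^ 5 / 5)) :
    ∫⁻ x, f x = ENNReal.ofReal R := by
  have hg' : g = fun x => c0 + c1 * x + c2 * x ^ 2 + c3 * x ^ 3 + c4 * x ^ 4 := funext hg
  have hcont : Continuous g := by rw [hg']; fun_prop
  have hintegral : ∫ x in l..u, g x = R := by
    have hd : ∀ x ∈ Set.uIcc l u, HasDerivAt (fun u : ℝ => c0 * u + c1 * u ^ 2 / 2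
        + c2 * u ^ 3 / 3 + c3 * u ^ 4 / 4 + c4 * u ^ 5 / 5) (g x) x := by
      intro x _
      have h1 := (hasDerivAt_id x).const_mul c0
      have h2 := ((hasDerivAt_pow 2 x).const_mul c1).div_const 2
      have h3 := ((hasDerivAt_pow 3 x).const_mul c2).div_const 3
      have h4 := ((hasDerivAt_pow 4 x).const_mul c3).div_const 4
      have h5 := ((hasDerivAt_pow 5 x).const_mul c4).div_const 5
      refine ((((h1.add h2).add h3).add h4).add h5).congr_deriv ?_
      rw [hg]; push_cast; ring
    rw [intervalIntegral.integral_eq_sub_of_hasDerivAt hd (hcont.intervalIntegrable _ _), hR]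
  have h1 : ∫⁻ x, f x = ∫⁻ x in Set.Ioc l u, ENNReal.ofReal (g x) := by
    rw [← lintegral_indicator measurableSet_Ioc]
    apply lintegral_congr_ae
    have hl : ∀ᵐ x : ℝ, x ≠ l := by simp [ae_iff]
    have hu : ∀ᵐ x : ℝ, x ≠ u := by simp [ae_iff]
    filter_upwards [hl, hu] with x hxl hxu
    by_cases hx : x ∈ Set.Ioc l u
    · rw [Set.indicator_of_mem hx]
      exact hf x hx.1 (lt_of_le_of_ne hx.2 hxu)
    · rw [Set.indicator_of_notMem hx]
      apply h0
      by_contra hc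
      push Not at hc
      exact hx ⟨lt_of_le_of_ne hc.1 hxl.symm, hc.2⟩
  rw [h1, ← hintegral, intervalIntegral.integral_of_le hlu, ofReal_integral_eq_lintegral_ofReal]
  · exact (hcont.integrableOn_Icc).mono_set Set.Ioc_subset_Icc_self
  · have hu : ∀ᵐ x : ℝ, x ≠ u := by simp [ae_iff]
    filter_upwards [ae_restrict_mem measurableSet_Ioc, ae_restrict_of_ae hu] with x hx hxu
    exact hnn x hx.1 (lt_of_le_of_ne hx.2 hxu)

open MeasureTheory in
lemma lint_split (f : ℝ → ENNReal) (m : ℝ) :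
    ∫⁻ x, f x = (∫⁻ x, (Set.Iic m).indicator f x) + ∫⁻ x, (Set.Ioi m).indicator f x := by
  rw [lintegral_indicator measurableSet_Iic, lintegral_indicator measurableSet_Ioi,
    ← Set.compl_Iic, lintegral_add_compl f measurableSet_Iic]

lemma intD (a b e d : ℝ) (h : 0 ≤ d ∧ d ≤ b ∧ 0 ≤ e ∧ e ≤ 1 - a - b ∧
    1 - a - b < a ∧ 1 - a - b < b ∧ b < a + e ∧ e < 1 / 2 - a ∧ 1 / 2 - a - e < d) :
    MeasureTheory.volume {c : ℝ | Qp a b e d c} = ENNReal.ofReal a := by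
  have : {c : ℝ | Qp a b e d c} = Set.Icc 0 a := by
    ext c
    simp only [Set.mem_ofPred_eq, Set.mem_Icc, Qp]
    tauto
  rw [this, Real.volume_Icc, sub_zero]

lemma intD0 (a b e d : ℝ) (h : ∀ c, ¬ Qp a b e d c) :
    MeasureTheory.volume {c : ℝ | Qp a b e d c} = 0 := by
  have : {c : ℝ | Qp a b e d c} = ∅ := by
    ext c
    simp [h c]
  rw [this, MeasureTheory.measure_empty]

open MeasureTheory in
lemma intE (a b e : ℝ) (h : 0 ≤ e ∧ 
    1 - a - b < a ∧ 1 - a - b < b ∧ b < a + e ∧ e < 1 / 2 - a) :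
    ∫⁻ d, volume {c : ℝ | Qp a b e d c} = ENNReal.ofReal (a * (b + e + a - 1 / 2)) := by
  obtain ⟨h1, h2, h3, h4, h5⟩ := h
  apply lint_poly _ (1 / 2 - a - e) b (fun _ => a) a 0 0 0 0
  · linarith
  · intro d hd hd'
    apply intD
    refine ⟨?_, ?_, ?_, ?_, ?_, ?_, ?_, ?_, ?_⟩ <;> linarith
  · rintro d hd
    apply intD0
    rintro c ⟨k1, k2, k3, k4, k5, k6, k7, k8, k9, k10, k11⟩
    rcases hd with hd | hd <;> linarith
  · intros; linarith
  · intro x; ring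
  · ring

open MeasureTheory in
lemma intE0 (a b e : ℝ) (h : ∀ d c, ¬ Qp a b e d c) :
    ∫⁻ d, volume {c : ℝ | Qp a b e d c} = 0 := by
  simp [intD0 _ _ _ _ (h _)]

open MeasureTheory in
lemma intB1 (a b : ℝ) (hab : a ≤ b) (hb : b < 1 / 2) (h1 : 1 - a - b < a) (h2 : 1 - a - b < b) :
    ∫⁻ e, ∫⁻ d, volume {c : ℝ | Qp a b e d c} =
      ENNReal.ofReal (a * (b ^ 2 - (2 * b - 1 / 2) ^ 2) / 2) := by
  apply lint_poly _ (b - a) (1 / 2 - a) (fun e => a * (b + e + a - 1 / 2))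
    (a * (b + a - 1 / 2)) a 0 0 0
  · linarith
  · intro e he he'
    apply intE
    refine ⟨?_, ?_, ?_, ?_, ?_⟩ <;> linarith
  · rintro e he
    apply intE0
    rintro d c ⟨k1, k2, k3, k4, k5, k6, k7, k8, k9, k10, k11⟩
    rcases he with he | he <;> linarith
  · intro e he he'
    apply mul_nonneg <;> linarith
  · intro x; ring
  · ring

open MeasureTheory in
lemma intB2 (a b : ℝ) (hab : b ≤ a) (ha : a < 1 / 2) (h1 : 1 - a - b < a) (h2 : 1 - a - b < b) :
    ∫⁻ e, ∫⁻ d, volume {c : ℝ | Qp a b e d c} =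
      ENNReal.ofReal (a * (b ^ 2 - (a + b - 1 / 2) ^ 2) / 2) := by
  apply lint_poly _ 0 (1 / 2 - a) (fun e => a * (b + e + a - 1 / 2))
    (a * (b + a - 1 / 2)) a 0 0 0
  · linarith
  · intro e he he'
    apply intE
    refine ⟨?_, ?_, ?_, ?_, ?_⟩ <;> linarith
  · rintro e he
    apply intE0
    rintro d c ⟨k1, k2, k3, k4, k5, k6, k7, k8, k9, k10, k11⟩
    rcases he with he | he <;> linarith
  · intro e he he'
    apply mul_nonneg <;> linarith
  · intro x; ring
  · ring

open MeasureTheory in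
lemma intB0 (a b : ℝ) (h : ∀ e d c, ¬ Qp a b e d c) :
    ∫⁻ e, ∫⁻ d, volume {c : ℝ | Qp a b e d c} = 0 := by
  simp [intE0 _ _ _ (h _)]

open MeasureTheory in
lemma intA1 (a : ℝ) (ha : 1 / 4 < a) (ha' : a < 1 / 3) :
    ∫⁻ b, ∫⁻ e, ∫⁻ d, volume {c : ℝ | Qp a b e d c} =
      ENNReal.ofReal (a * (1 / 96 - (1 - 2 * a) ^ 3 / 6 + (3 / 2 - 4 * a) ^ 3 / 12)) := by
  apply lint_poly _ (1 - 2 * a) (1 / 2) (fun b => a * (b ^ 2 - (2 * b - 1 / 2) ^ 2) / 2)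
    (- a / 8) a (- 3 / 2 * a) 0 0
  · linarith
  · intro b hb hb'
    apply intB1 <;> linarith
  · rintro b hb
    apply intB0
    rintro e d c ⟨k1, k2, k3, k4, k5, k6, k7, k8, k9, k10, k11⟩
    rcases hb with hb | hb <;> linarith
  · intro b hb hb'
    have : 0 ≤ (b - (2 * b - 1 / 2)) * (b + (2 * b - 1 / 2)) := by
      apply mul_nonneg <;> linarith
    have := mul_nonneg (by linarith : 0 ≤ a) this
    nlinarith
  · intro x; ring
  · ring

open MeasureTheory in
lemma intA2 (a : ℝ) (ha : 1 / 3 < a) (ha' : a < 1 / 2) :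
    ∫⁻ b, ∫⁻ e, ∫⁻ d, volume {c : ℝ | Qp a b e d c} =
      ENNReal.ofReal (a * (1 / 96 - (2 * a - 1 / 2) ^ 3 / 12 - (1 - a) ^ 3 / 48 + a ^ 3 / 48)) := by
  rw [lint_split _ a]
  have e1 : ∫⁻ b, (Set.Iic a).indicator
      (fun b => ∫⁻ e, ∫⁻ d, volume {c : ℝ | Qp a b e d c}) b =
      ENNReal.ofReal (a * (a ^ 3 / 6 - (2 * a - 1 / 2) ^ 3 / 6 - (1 - a) ^ 3 / 48 + a ^ 3 / 48)) := by
    apply lint_poly _ ((1 - a) / 2) a (fun b => a * (b ^ 2 - (a + b - 1 / 2) ^ 2) / 2)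
      (- a * (a - 1 / 2) ^ 2 / 2) (- a * (a - 1 / 2)) 0 0 0
    · linarith
    · intro b hb hb'
      rw [Set.indicator_of_mem (show b ∈ Set.Iic a from hb'.le)]
      apply intB2 <;> linarith
    · rintro b hb
      rcases hb with hb | hb
      · rw [Set.indicator_of_mem (show b ∈ Set.Iic a by simp only [Set.mem_Iic]; linarith)]
        apply intB0
        rintro e d c ⟨k1, k2, k3, k4, k5, k6, k7, k8, k9, k10, k11⟩
        linarith
      · exact Set.indicator_of_notMem (by simpa using hb) _
    · intro b hb hb'
      have : 0 ≤ (b - (a + b - 1 / 2)) * (b + (a + b - 1 / 2)) := by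
        apply mul_nonneg <;> linarith
      have := mul_nonneg (by linarith : 0 ≤ a) this
      nlinarith
    · intro x; ring
    · ring
  have e2 : ∫⁻ b, (Set.Ioi a).indicator
      (fun b => ∫⁻ e, ∫⁻ d, volume {c : ℝ | Qp a b e d c}) b =
      ENNReal.ofReal (a * (1 / 96 - a ^ 3 / 6 + (2 * a - 1 / 2) ^ 3 / 12)) := by
    apply lint_poly _ a (1 / 2) (fun b => a * (b ^ 2 - (2 * b - 1 / 2) ^ 2) / 2)
      (- a / 8) a (- 3 / 2 * a) 0 0
    · linarith
    · intro b hb hb'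
      rw [Set.indicator_of_mem (show b ∈ Set.Ioi a from hb)]
      apply intB1 <;> linarith
    · rintro b hb
      rcases hb with hb | hb
      · exact Set.indicator_of_notMem (by simpa using hb.le) _
      · rw [Set.indicator_of_mem (show b ∈ Set.Ioi a by simp only [Set.mem_Ioi]; linarith)]
        apply intB0
        rintro e d c ⟨k1, k2, k3, k4, k5, k6, k7, k8, k9, k10, k11⟩
        linarith
    · intro b hb hb'
      have : 0 ≤ (b - (2 * b - 1 / 2)) * (b + (2 * b - 1 / 2)) := by
        apply mul_nonneg <;> linarith
      have := mul_nonneg (by linarith : 0 ≤ a) this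
      nlinarith
    · intro x; ring
    · ring
  rw [e1, e2, ← ENNReal.ofReal_add]
  · congr 1; ring
  · apply mul_nonneg (by linarith)
    have : (a ^ 3 / 6 - (2 * a - 1 / 2) ^ 3 / 6 - (1 - a) ^ 3 / 48 + a ^ 3 / 48) =
      3 / 32 * (1 / 2 - a) * (2 * a) * (6 * a - 2) := by ring
    rw [this]
    refine mul_nonneg (mul_nonneg (mul_nonneg ?_ ?_) ?_) ?_ <;> linarith
  · apply mul_nonneg (by linarith)
    have : (1 / 96 - a ^ 3 / 6 + (2 * a - 1 / 2) ^ 3 / 12) =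
      (1 / 2 - a) ^ 2 * (a / 2) := by ring
    rw [this]
    exact mul_nonneg (sq_nonneg _) (by linarith)

open MeasureTheory in
lemma volQ' : ∫⁻ a, ∫⁻ b, ∫⁻ e, ∫⁻ d, volume {c : ℝ | Qp a b e d c} =
    ENNReal.ofReal (127 / 414720) := by
  rw [lint_split _ (1 / 3)]
  have e1 : ∫⁻ a, (Set.Iic (1 / 3 : ℝ)).indicator
      (fun a => ∫⁻ b, ∫⁻ e, ∫⁻ d, volume {c : ℝ | Qp a b e d c}) a =
      ENNReal.ofReal (7 / 155520) := by
    apply lint_poly _ (1 / 4) (1 / 3) (fun a => a * (1 / 96 - (1 - 2 * a) ^ 3 / 6 + (3 / 2 - 4 * a) ^ 3 / 12))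
      0 (1 / 96 - 1 / 6 + 9 / 32) (1 - 9 / 4) (- 2 + 6) (8 / 6 - 64 / 12)
    · norm_num
    · intro b hb hb'
      rw [Set.indicator_of_mem (show b ∈ Set.Iic (1 / 3 : ℝ) from hb'.le)]
      exact intA1 b hb hb'
    · rintro b hb
      rcases hb with hb | hb
      · rw [Set.indicator_of_mem (show b ∈ Set.Iic (1 / 3 : ℝ) by simp only [Set.mem_Iic]; linarith)]
        have : ∀ a e d c, ¬ Qp b a e d c := by
          rintro a e d c ⟨k1, k2, k3, k4, k5, k6, k7, k8, k9, k10, k11⟩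
          linarith
        simp [intB0 _ _ (this _)]
      · exact Set.indicator_of_notMem (by simpa using hb) _
    · intro a ha ha'
      apply mul_nonneg (by linarith)
      have : (1 / 96 - (1 - 2 * a) ^ 3 / 6 + (3 / 2 - 4 * a) ^ 3 / 12) =
        (a - 1 / 4) ^ 2 * (2 - 4 * a) := by ring
      rw [this]
      exact mul_nonneg (sq_nonneg _) (by linarith)
    · intro x; ring
    · norm_num
  have e2 : ∫⁻ a, (Set.Ioi (1 / 3 : ℝ)).indicator
      (fun a => ∫⁻ b, ∫⁻ e, ∫⁻ d, volume {c : ℝ | Qp a b e d c}) a =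
      ENNReal.ofReal (7/46080 + 17/155520) := by
    apply lint_poly _ (1 / 3) (1 / 2) (fun a => a * (1 / 96 - (2 * a - 1 / 2) ^ 3 / 12 - (1 - a) ^ 3 / 48 + a ^ 3 / 48))
      0 (1 / 96 + 1 / 96 - 1 / 48) (- 1 / 8 + 3 / 48) (1 / 2 - 3 / 48) (- 8 / 12 + 2 / 48)
    · norm_num
    · intro b hb hb'
      rw [Set.indicator_of_mem (show b ∈ Set.Ioi (1 / 3 : ℝ) from hb)]
      exact intA2 b hb hb'
    · rintro b hb
      rcases hb with hb | hb
      · exact Set.indicator_of_notMem (by simp only [Set.mem_Ioi]; linarith) _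
      · rw [Set.indicator_of_mem (show b ∈ Set.Ioi (1 / 3 : ℝ) by simp only [Set.mem_Ioi]; linarith)]
        have : ∀ a e d c, ¬ Qp b a e d c := by
          rintro a e d c ⟨k1, k2, k3, k4, k5, k6, k7, k8, k9, k10, k11⟩
          linarith
        simp [intB0 _ _ (this _)]
    · intro a ha ha'
      apply mul_nonneg (by linarith)
      have : (1 / 96 - (2 * a - 1 / 2) ^ 3 / 12 - (1 - a) ^ 3 / 48 + a ^ 3 / 48) =
        (1 / 2 - a) * (2 * a) * (3 / 32 * (6 * a - 2) + (1 / 2 - a) / 4) := by ring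
      rw [this]
      refine mul_nonneg (mul_nonneg ?_ ?_) ?_ <;> linarith
    · intro x; ring
    · norm_num
  rw [e1, e2, ← ENNReal.ofReal_add]
  · congr 1; norm_num
  · norm_num
  · norm_num


/-- The region as a subset of `ℝ^5`. -/
def Q5 : Set (Fin 5 → ℝ) := {w | Qp (w 0) (w 1) (w 2) (w 3) (w 4)}

lemma measQ5 : MeasurableSet Q5 := by
  unfold Q5 Qp
  measurability

open MeasureTheory in
lemma volQ5 : volume Q5 = ENNReal.ofReal (127 / 414720) := by
  have m4 : ∀ a, MeasurableSet {w : Fin 4 → ℝ | Qp a (w 0) (w 1) (w 2) (w 3)} := by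
    intro a; unfold Qp; measurability
  have m3 : ∀ a b, MeasurableSet {w : Fin 3 → ℝ | Qp a b (w 0) (w 1) (w 2)} := by
    intro a b; unfold Qp; measurability
  have m2 : ∀ a b e, MeasurableSet {w : Fin 2 → ℝ | Qp a b e (w 0) (w 1)} := by
    intro a b e; unfold Qp; measurability
  have m1 : ∀ a b e d, MeasurableSet {w : Fin 1 → ℝ | Qp a b e d (w 0)} := by
    intro a b e d; unfold Qp; measurability
  rw [← volQ', volume_slice _ measQ5]
  refine lintegral_congr fun a => ?_
  refine Eq.trans (volume_slice _ (m4 a)) ?_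
  refine lintegral_congr fun b => ?_
  refine Eq.trans (volume_slice _ (m3 a b)) ?_
  refine lintegral_congr fun e => ?_
  refine Eq.trans (volume_slice _ (m2 a b e)) ?_
  refine lintegral_congr fun d => ?_
  have h := (volume_preserving_funUnique (Fin 1) ℝ).measure_preimage_equiv
    {c : ℝ | Qp a b e d c}
  rw [← h]
  rfl

open MeasureTheory in
/-- Affine maps with determinant `±1` preserve volume. -/
lemma affine_mp (M : Matrix (Fin 5) (Fin 5) ℝ) (k : Fin 5 → ℝ) (h : |M.det| = 1) :
    MeasurePreserving (fun v => Matrix.toLin' M v + k) volume volume := by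
  have h0 : M.det ≠ 0 := by
    intro h'
    rw [h'] at h
    norm_num at h
  have h1 : MeasurePreserving (Matrix.toLin' M) volume volume := by
    refine ⟨(Matrix.toLin' M).continuous_of_finiteDimensional.measurable, ?_⟩
    rw [Real.map_matrix_volume_pi_eq_smul_volume_pi h0, abs_inv, h]
    simp
  exact (measurePreserving_add_right volume k).comp h1

open MeasureTheory in
lemma hyperplane_null (n : Fin 5 → ℝ) (hn : n ≠ 0) (k : ℝ) :
    ∀ᵐ v : Fin 5 → ℝ, n 0 * v 0 + n 1 * v 1 + n 2 * v 2 + n 3 * v 3 + n 4 * v 4 ≠ k := by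
  let s : AffineSubspace ℝ (Fin 5 → ℝ) :=
    { carrier := {v | n 0 * v 0 + n 1 * v 1 + n 2 * v 2 + n 3 * v 3 + n 4 * v 4 = k}
      smul_vsub_vadd_mem' := by
        intro c p q r hp hq hr
        simp only [Set.mem_ofPred_eq, vsub_eq_sub, vadd_eq_add, Pi.add_apply, Pi.smul_apply,
          Pi.sub_apply, smul_eq_mul] at *
        linear_combination c * hp - c * hq + hr }
  have hs : s ≠ ⊤ := by
    intro hs
    apply hn
    have hall : ∀ v : Fin 5 → ℝ,
        n 0 * v 0 + n 1 * v 1 + n 2 * v 2 + n 3 * v 3 + n 4 * v 4 = k := by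
      intro v
      have : v ∈ s := by rw [hs]; trivial
      exact this
    have h0 := hall 0
    simp only [Pi.zero_apply, mul_zero, add_zero] at h0
    have hv := hall n
    rw [← h0] at hv
    funext i
    have := mul_self_nonneg (n 0)
    have := mul_self_nonneg (n 1)
    have := mul_self_nonneg (n 2)
    have := mul_self_nonneg (n 3)
    have := mul_self_nonneg (n 4)
    fin_cases i <;> simp only [Pi.zero_apply] <;> apply mul_self_eq_zero.mp <;>
      simp only [Fin.zero_eta, Fin.mk_one, Fin.reduceFinMk] <;> linarith
  have := Measure.addHaar_affineSubspace volume s hs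
  rw [ae_iff]
  simp only [ne_eq, not_not]
  exact this

open MeasureTheory in
lemma vol_of_affine (s : Profile → Profile) (M : Matrix (Fin 5) (Fin 5) ℝ) (k : Fin 5 → ℝ)
    (h : |M.det| = 1)
    (hM : ∀ v : Fin 5 → ℝ, (Matrix.toLin' M v + k) ∈ Q5 ↔ Rp (s (profOf v))) :
    volume {v | Rp (s (profOf v))} = ENNReal.ofReal (127 / 414720) ∧
      MeasurableSet {v | Rp (s (profOf v))} := by
  have e : {v | Rp (s (profOf v))} = (fun v => Matrix.toLin' M v + k) ⁻¹' Q5 := by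
    ext v
    exact (hM v).symm
  rw [e]
  exact ⟨by rw [(affine_mp M k h).measure_preimage measQ5.nullMeasurableSet, volQ5],
    (affine_mp M k h).measurable measQ5⟩

open MeasureTheory in
lemma region1 :
    volume {v | Rp ((fun p => p) (profOf v))} = ENNReal.ofReal (127 / 414720) ∧
      MeasurableSet {v | Rp ((fun p => p) (profOf v))} := by
  refine vol_of_affine (fun p => p) !![1, 1, 0, 0, 0; 0, 0, 1, 1, 0; 0, 0, 0, 0, 1; 0, 0, 1, 0, 0; 1, 0, 0, 0, 0]
    ![0, 0, 0, 0, 0] ?_ ?_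
  · simp [Matrix.det_succ_row_zero, Fin.sum_univ_succ, Fin.succAbove]
  · intro v
    simp only [Q5, Set.mem_ofPred_eq, Matrix.toLin'_apply, Pi.add_apply, Matrix.mulVec,
      dotProduct, Fin.sum_univ_five, Matrix.of_apply, Matrix.cons_val, Rp, sAB, sBC, profOf,
      Profile.X, Profile.Y]
    apply iff_of_eq
    congr 1 <;> ring

open MeasureTheory in
lemma region2 :
    volume {v | Rp ((fun p => sBC p) (profOf v))} = ENNReal.ofReal (127 / 414720) ∧
      MeasurableSet {v | Rp ((fun p => sBC p) (profOf v))} := by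
  refine vol_of_affine (fun p => sBC p) !![1, 1, 0, 0, 0; -1, -1, -1, -1, 0; 0, 0, 1, 0, 0; 0, 0, 0, 0, 1; 0, 1, 0, 0, 0]
    ![0, 1, 0, 0, 0] ?_ ?_
  · simp [Matrix.det_succ_row_zero, Fin.sum_univ_succ, Fin.succAbove]
  · intro v
    simp only [Q5, Set.mem_ofPred_eq, Matrix.toLin'_apply, Pi.add_apply, Matrix.mulVec,
      dotProduct, Fin.sum_univ_five, Matrix.of_apply, Matrix.cons_val, Rp, sAB, sBC, profOf,
      Profile.X, Profile.Y]
    apply iff_of_eq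
    congr 1 <;> ring

open MeasureTheory in
lemma region3 :
    volume {v | Rp ((fun p => sAB p) (profOf v))} = ENNReal.ofReal (127 / 414720) ∧
      MeasurableSet {v | Rp ((fun p => sAB p) (profOf v))} := by
  refine vol_of_affine (fun p => sAB p) !![0, 0, 1, 1, 0; 1, 1, 0, 0, 0; -1, -1, -1, -1, -1; 1, 0, 0, 0, 0; 0, 0, 1, 0, 0]
    ![0, 0, 1, 0, 0] ?_ ?_
  · simp [Matrix.det_succ_row_zero, Fin.sum_univ_succ, Fin.succAbove]
  · intro v
    simp only [Q5, Set.mem_ofPred_eq, Matrix.toLin'_apply, Pi.add_apply, Matrix.mulVec,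
      dotProduct, Fin.sum_univ_five, Matrix.of_apply, Matrix.cons_val, Rp, sAB, sBC, profOf,
      Profile.X, Profile.Y]
    apply iff_of_eq
    congr 1 <;> ring

open MeasureTheory in
lemma region4 :
    volume {v | Rp ((fun p => sBC (sAB p)) (profOf v))} = ENNReal.ofReal (127 / 414720) ∧
      MeasurableSet {v | Rp ((fun p => sBC (sAB p)) (profOf v))} := by
  refine vol_of_affine (fun p => sBC (sAB p)) !![0, 0, 1, 1, 0; -1, -1, -1, -1, 0; 1, 0, 0, 0, 0; -1, -1, -1, -1, -1; 0, 0, 0, 1, 0]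
    ![0, 1, 0, 1, 0] ?_ ?_
  · simp [Matrix.det_succ_row_zero, Fin.sum_univ_succ, Fin.succAbove]
  · intro v
    simp only [Q5, Set.mem_ofPred_eq, Matrix.toLin'_apply, Pi.add_apply, Matrix.mulVec,
      dotProduct, Fin.sum_univ_five, Matrix.of_apply, Matrix.cons_val, Rp, sAB, sBC, profOf,
      Profile.X, Profile.Y]
    apply iff_of_eq
    congr 1 <;> ring

open MeasureTheory in
lemma region5 :
    volume {v | Rp ((fun p => sAB (sBC p)) (profOf v))} = ENNReal.ofReal (127 / 414720) ∧
      MeasurableSet {v | Rp ((fun p => sAB (sBC p)) (profOf v))} := by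
  refine vol_of_affine (fun p => sAB (sBC p)) !![-1, -1, -1, -1, 0; 1, 1, 0, 0, 0; 0, 0, 0, 1, 0; 0, 1, 0, 0, 0; 0, 0, 0, 0, 1]
    ![1, 0, 0, 0, 0] ?_ ?_
  · simp [Matrix.det_succ_row_zero, Fin.sum_univ_succ, Fin.succAbove]
  · intro v
    simp only [Q5, Set.mem_ofPred_eq, Matrix.toLin'_apply, Pi.add_apply, Matrix.mulVec,
      dotProduct, Fin.sum_univ_five, Matrix.of_apply, Matrix.cons_val, Rp, sAB, sBC, profOf,
      Profile.X, Profile.Y]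
    apply iff_of_eq
    congr 1 <;> ring

open MeasureTheory in
lemma region6 :
    volume {v | Rp ((fun p => sBC (sAB (sBC p))) (profOf v))} = ENNReal.ofReal (127 / 414720) ∧
      MeasurableSet {v | Rp ((fun p => sBC (sAB (sBC p))) (profOf v))} := by
  refine vol_of_affine (fun p => sBC (sAB (sBC p))) !![-1, -1, -1, -1, 0; 0, 0, 1, 1, 0; 0, 1, 0, 0, 0; 0, 0, 0, 1, 0; -1, -1, -1, -1, -1]
    ![1, 0, 0, 0, 1] ?_ ?_
  · simp [Matrix.det_succ_row_zero, Fin.sum_univ_succ, Fin.succAbove]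
  · intro v
    simp only [Q5, Set.mem_ofPred_eq, Matrix.toLin'_apply, Pi.add_apply, Matrix.mulVec,
      dotProduct, Fin.sum_univ_five, Matrix.of_apply, Matrix.cons_val, Rp, sAB, sBC, profOf,
      Profile.X, Profile.Y]
    apply iff_of_eq
    congr 1 <;> ring


open MeasureTheory in
lemma ae_generic : ∀ᵐ v : Fin 5 → ℝ, generic (profOf v) := by
  have nz : ∀ n : Fin 5 → ℝ, n 3 ≠ 0 → n ≠ 0 := by
    rintro n h rfl
    exact h rfl
  filter_upwards [hyperplane_null ![1, 1, -1, -1, 0] (nz _ (by simp)) 0,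
    hyperplane_null ![1, 1, 2, 2, 0] (nz _ (by simp)) 1,
    hyperplane_null ![2, 2, 1, 1, 0] (nz _ (by simp)) 1,
    hyperplane_null ![2, 2, 0, 0, 2] (fun h => by simpa using congrFun h 0) 1,
    hyperplane_null ![2, 2, 2, 0, 0] (fun h => by simpa using congrFun h 0) 1,
    hyperplane_null ![2, 0, 2, 2, 0] (fun h => by simpa using congrFun h 0) 1]
    with v h1 h2 h3 h4 h5 h6
  simp only [Matrix.cons_val] at h1 h2 h3 h4 h5 h6
  simp only [generic, profOf, Profile.X, Profile.Y, Profile.Z]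
  refine ⟨fun h => h1 ?_, fun h => h2 ?_, fun h => h3 ?_, fun h => h4 ?_, fun h => h5 ?_,
    fun h => h6 ?_⟩ <;> linarith

lemma event_iff (v : Fin 5 → ℝ) (hg : generic (profOf v)) :
    (v ∈ T ∧ ∃ W : Cand, ¬ strictlySmallest W (profOf v) ∧ paradox W (profOf v)) ↔
    ((Rp (profOf v) ∨ Rp (sBC (profOf v))) ∨ (Rp (sAB (profOf v)) ∨ Rp (sBC (sAB (profOf v)))) ∨
      (Rp (sAB (sBC (profOf v))) ∨ Rp (sBC (sAB (sBC (profOf v)))))) := by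
  have hs : (profOf v).x1 + (profOf v).x2 + (profOf v).y1 + (profOf v).y2 + (profOf v).z1
      + (profOf v).z2 = 1 := by
    simp only [profOf]; ring
  have hT : v ∈ T ↔ (profOf v).nonneg := by
    simp only [T, Set.mem_ofPred_eq, Profile.nonneg, profOf, Fin.forall_fin_succ, sub_nonneg]
    simp [and_assoc]
  have hR : ((Rp (profOf v) ∨ Rp (sBC (profOf v))) ∨
      (Rp (sAB (profOf v)) ∨ Rp (sBC (sAB (profOf v)))) ∨
      (Rp (sAB (sBC (profOf v))) ∨ Rp (sBC (sAB (sBC (profOf v)))))) → (profOf v).nonneg := by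
    simp only [Rp, Qp, sAB, sBC, Profile.X, Profile.Y, Profile.nonneg]
    rintro ((⟨k1, k2, k3, k4, k5, k6, -⟩ | ⟨k1, k2, k3, k4, k5, k6, -⟩) |
      (⟨k1, k2, k3, k4, k5, k6, -⟩ | ⟨k1, k2, k3, k4, k5, k6, -⟩) |
      (⟨k1, k2, k3, k4, k5, k6, -⟩ | ⟨k1, k2, k3, k4, k5, k6, -⟩)) <;>
    refine ⟨?_, ?_, ?_, ?_, ?_, ?_⟩ <;> linarith
  rw [hT]
  constructor
  · rintro ⟨hp, W, hW⟩
    cases W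
    · exact Or.inl ((event_iff_A _ hp hs hg).1 hW)
    · exact Or.inr (Or.inl ((event_iff_B _ hp hs hg).1 hW))
    · exact Or.inr (Or.inr ((event_iff_C _ hp hs hg).1 hW))
  · intro h
    have hp := hR h
    refine ⟨hp, ?_⟩
    rcases h with h | h | h
    · exact ⟨Cand.A, (event_iff_A _ hp hs hg).2 h⟩
    · exact ⟨Cand.B, (event_iff_B _ hp hs hg).2 h⟩
    · exact ⟨Cand.C, (event_iff_C _ hp hs hg).2 h⟩

theorem stmt16 :
    MeasureTheory.volume
      {v ∈ T | ∃ W : Cand, ¬ strictlySmallest W (profOf v) ∧ paradox W (profOf v)} =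
      (127 / 576) * (1 / 120 : ENNReal) := by
  have hae : ({v ∈ T | ∃ W : Cand, ¬ strictlySmallest W (profOf v) ∧ paradox W (profOf v)} :
      Set (Fin 5 → ℝ)) =ᵐ[MeasureTheory.volume]
      (({v | Rp (profOf v)} ∪ {v | Rp (sBC (profOf v))}) ∪
      (({v | Rp (sAB (profOf v))} ∪ {v | Rp (sBC (sAB (profOf v)))}) ∪
      ({v | Rp (sAB (sBC (profOf v)))} ∪ {v | Rp (sBC (sAB (sBC (profOf v))))})) :
      Set (Fin 5 → ℝ)) := by
    filter_upwards [ae_generic] with v hv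
    exact propext (event_iff v hv)
  rw [MeasureTheory.measure_congr hae]
  obtain ⟨v1, -⟩ := region1
  obtain ⟨v2, m2⟩ := region2
  obtain ⟨v3, m3⟩ := region3
  obtain ⟨v4, m4⟩ := region4
  obtain ⟨v5, m5⟩ := region5
  obtain ⟨v6, m6⟩ := region6
  rw [MeasureTheory.measure_union _ ((m3.union m4).union (m5.union m6)),
    MeasureTheory.measure_union _ m2, MeasureTheory.measure_union _ (m5.union m6),
    MeasureTheory.measure_union _ m4, MeasureTheory.measure_union _ m6,
    v1, v2, v3, v4, v5, v6]
  · have e : (127 / 576 * (1 / 120) : ENNReal) = ENNReal.ofReal (127 / 576 * (1 / 120)) := by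
      rw [ENNReal.ofReal_mul (by norm_num), ENNReal.ofReal_div_of_pos (by norm_num),
        ENNReal.ofReal_div_of_pos (by norm_num)]
      simp
    rw [e]
    repeat rw [← ENNReal.ofReal_add (by norm_num) (by norm_num)]
    norm_num
  all_goals
    rw [Set.disjoint_left]
    intro v h h'
    simp only [Set.mem_union, Set.mem_ofPred_eq, Rp, Qp, sAB, sBC, profOf,
      Profile.X, Profile.Y] at h h'
    (try casesm* _ ∨ _) <;> casesm* _ ∧ _ <;> linarith
end

section
/- (Proposition 5, plurality loser reinforcement paradox probability under IAC, complete ballots.) The IAC probability, over complete-ballot profiles with total 1, of the event that the candidate whose first-place total is strictly smallest among the three candidates demonstrates a reinforcement paradox (a plurality loser reinforcement paradox) equals 79/1152. -/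
theorem paradox_C_iff (p : Profile) (h : p.nonneg) (hx : p.Z < p.X) (hy : p.Z < p.Y) :
    paradox Cand.C p ↔ p.X + p.Y < 3 * p.Z ∧ p.Y - p.Z < p.x2 ∧ p.X - p.Z < p.y2 ∧
      p.X + p.Y - p.Z < 2 * (p.x2 + p.y2) := by
  obtain ⟨x1, x2, y1, y2, z1, z2⟩ := p
  simp only [Profile.nonneg, Profile.X, Profile.Y, Profile.Z] at *
  obtain ⟨h1, h2, h3, h4, h5, h6⟩ := h
  constructor
  · rintro ⟨⟨a1, a2, a3, a4, a5, a6⟩, ⟨b1, b2, b3, b4, b5, b6⟩, ha, hb, hs, wa, wb, -⟩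
    have hs' : Profile.mk (a1+b1) (a2+b2) (a3+b3) (a4+b4) (a5+b5) (a6+b6) =
      Profile.mk x1 x2 y1 y2 z1 z2 := hs
    simp only [Profile.mk.injEq] at hs'
    obtain ⟨rfl, rfl, rfl, rfl, rfl, rfl⟩ := hs'
    simp only [Profile.nonneg, wins, Profile.X, Profile.Y, Profile.Z] at *
    obtain ⟨_, _, _, _, _, _⟩ := ha
    obtain ⟨_, _, _, _, _, _⟩ := hb
    rcases wa with wa | ⟨_, _, _⟩ | ⟨_, _, _⟩ <;> rcases wb with wb | ⟨_, _, _⟩ | ⟨_, _, _⟩ <;>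
      first
      | (exfalso; linarith)
      | (refine ⟨?_, ?_, ?_, ?_⟩ <;> linarith)
  · rintro ⟨c1, c2, c3, c4⟩
    obtain ⟨σ, s1, s2⟩ : ∃ σ, (x1 + x2 + (y1 + y2) - (z1 + z2)) / 2 < σ ∧
        σ < min (x2 + y2) (z1 + z2) :=
      exists_between (lt_min (by linarith) (by linarith))
    rw [lt_min_iff] at s2
    obtain ⟨t, t1, t2⟩ : ∃ t, max (y1 + y2 - (z1 + z2)) (σ - y2) < t ∧
        t < min x2 (σ - (x1 + x2 - (z1 + z2))) :=
      exists_between (max_lt (lt_min (by linarith) (by linarith))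
        (lt_min (by linarith) (by linarith)))
    rw [lt_min_iff] at t2
    rw [max_lt_iff] at t1
    obtain ⟨a, a1, a2⟩ : ∃ a, max t (y1 + y2 - σ) < a ∧
        a < min (z1 + z2 - (σ - t)) (z1 + z2 + σ - (x1 + x2)) :=
      exists_between (max_lt (lt_min (by linarith) (by linarith))
        (lt_min (by linarith) (by linarith)))
    rw [lt_min_iff] at a2
    rw [max_lt_iff] at a1
    obtain ⟨s1', s2'⟩ := s2
    obtain ⟨t1, t1'⟩ := t1
    obtain ⟨t2, t2'⟩ := t2
    obtain ⟨a1, a1'⟩ := a1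
    obtain ⟨a2, a2'⟩ := a2
    obtain ⟨b, b1, b2, b3, b4⟩ : ∃ b, 0 ≤ b ∧ b ≤ z1 ∧ 0 ≤ a - b ∧ a - b ≤ z2 := by
      rcases le_total a z1 with h | h
      · exact ⟨a, by linarith, h, by linarith, by linarith⟩
      · exact ⟨z1, by linarith, le_rfl, by linarith, by linarith⟩
    refine ⟨⟨0, t, y1, y2 - (σ - t), b, a - b⟩, ⟨x1, x2 - t, 0, σ - t, z1 - b, z2 - (a - b)⟩,
      ?_, ?_, ?_, ?_, ?_, ?_⟩
    · simp only [Profile.nonneg]; refine ⟨?_, ?_, ?_, ?_, ?_, ?_⟩ <;> linarith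
    · simp only [Profile.nonneg]; refine ⟨?_, ?_, ?_, ?_, ?_, ?_⟩ <;> linarith
    · change Profile.mk _ _ _ _ _ _ = _
      simp only [Profile.mk.injEq]; refine ⟨?_, ?_, ?_, ?_, ?_, ?_⟩ <;> ring
    · right; left
      simp only [Profile.X, Profile.Y, Profile.Z]; refine ⟨?_, ?_, ?_⟩ <;> linarith
    · right; right
      simp only [Profile.X, Profile.Y, Profile.Z]; refine ⟨?_, ?_, ?_⟩ <;> linarith
    · simp only [wins, Profile.X, Profile.Y, Profile.Z]
      rintro (h | ⟨_, _, _⟩ | ⟨_, _, _⟩) <;> linarith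

def swapAC (p : Profile) : Profile := ⟨p.z2, p.z1, p.y2, p.y1, p.x2, p.x1⟩
def swapBC (p : Profile) : Profile := ⟨p.x2, p.x1, p.z1, p.z2, p.y1, p.y2⟩

theorem wins_swapAC (p : Profile) : wins Cand.C (swapAC p) ↔ wins Cand.A p := by
  simp only [wins, swapAC, Profile.X, Profile.Y, Profile.Z]
  constructor <;> (rintro (h | ⟨_, _, _⟩ | ⟨_, _, _⟩) <;> first
    | (left; linarith)
    | (right; left; refine ⟨?_, ?_, ?_⟩ <;> linarith)
    | (right; right; refine ⟨?_, ?_, ?_⟩ <;> linarith))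

theorem wins_swapBC (p : Profile) : wins Cand.C (swapBC p) ↔ wins Cand.B p := by
  simp only [wins, swapBC, Profile.X, Profile.Y, Profile.Z]
  constructor <;> (rintro (h | ⟨_, _, _⟩ | ⟨_, _, _⟩) <;> first
    | (left; linarith)
    | (right; left; refine ⟨?_, ?_, ?_⟩ <;> linarith)
    | (right; right; refine ⟨?_, ?_, ?_⟩ <;> linarith))

theorem paradox_swapAC (p : Profile) : paradox Cand.A p ↔ paradox Cand.C (swapAC p) := by
  constructor
  · rintro ⟨a, b, ha, hb, rfl, h1, h2, h3⟩
    exact ⟨swapAC a, swapAC b, by simp only [Profile.nonneg, swapAC] at *; tauto,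
      by simp only [Profile.nonneg, swapAC] at *; tauto, rfl, (wins_swapAC _).2 h1,
      (wins_swapAC _).2 h2, fun h => h3 ((wins_swapAC _).1 h)⟩
  · rintro ⟨a, b, ha, hb, h, h1, h2, h3⟩
    refine ⟨swapAC a, swapAC b, by simp only [Profile.nonneg, swapAC] at *; tauto,
      by simp only [Profile.nonneg, swapAC] at *; tauto, ?_, (wins_swapAC _).1 h1,
      (wins_swapAC _).1 h2, fun h => h3 ((wins_swapAC _).2 h)⟩
    exact congrArg swapAC h

theorem paradox_swapBC (p : Profile) : paradox Cand.B p ↔ paradox Cand.C (swapBC p) := by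
  constructor
  · rintro ⟨a, b, ha, hb, rfl, h1, h2, h3⟩
    exact ⟨swapBC a, swapBC b, by simp only [Profile.nonneg, swapBC] at *; tauto,
      by simp only [Profile.nonneg, swapBC] at *; tauto, rfl, (wins_swapBC _).2 h1,
      (wins_swapBC _).2 h2, fun h => h3 ((wins_swapBC _).1 h)⟩
  · rintro ⟨a, b, ha, hb, h, h1, h2, h3⟩
    refine ⟨swapBC a, swapBC b, by simp only [Profile.nonneg, swapBC] at *; tauto,
      by simp only [Profile.nonneg, swapBC] at *; tauto, ?_, (wins_swapBC _).1 h1,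
      (wins_swapBC _).1 h2, fun h => h3 ((wins_swapBC _).2 h)⟩
    exact congrArg swapBC h

theorem smallest_A (p : Profile) : strictlySmallest Cand.A p ↔ p.X < p.Y ∧ p.X < p.Z :=
  ⟨fun h => ⟨h Cand.B (by simp), h Cand.C (by simp)⟩, fun h W hW => by
    cases W <;> simp_all [fp]⟩

theorem smallest_B (p : Profile) : strictlySmallest Cand.B p ↔ p.Y < p.X ∧ p.Y < p.Z :=
  ⟨fun h => ⟨h Cand.A (by simp), h Cand.C (by simp)⟩, fun h W hW => by
    cases W <;> simp_all [fp]⟩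

theorem smallest_C (p : Profile) : strictlySmallest Cand.C p ↔ p.Z < p.X ∧ p.Z < p.Y :=
  ⟨fun h => ⟨h Cand.A (by simp), h Cand.B (by simp)⟩, fun h W hW => by
    cases W <;> simp_all [fp]⟩

open MeasureTheory

theorem vol_succ {n : ℕ} (S : Set (Fin (n + 1) → ℝ)) (hS : MeasurableSet S) :
    volume S = ∫⁻ a : ℝ, volume {w : Fin n → ℝ | (Matrix.vecCons a w) ∈ S} := by
  have hp := (volume_preserving_piFinSuccAbove (fun _ : Fin (n + 1) => ℝ) 0).symm
  rw [← hp.measure_preimage hS.nullMeasurableSet]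
  rw [Measure.volume_eq_prod, Measure.prod_apply (hp.measurable hS)]
  refine lintegral_congr fun a => ?_
  congr 1
  ext w
  simp only [Set.mem_preimage, Set.mem_ofPred_eq]
  have : (MeasurableEquiv.piFinSuccAbove (fun _ : Fin (n + 1) => ℝ) 0).symm (a, w) =
      Matrix.vecCons a w := Fin.insertNth_zero' a w
  rw [this]

theorem meas_cons {n : ℕ} (S : Set (Fin (n + 1) → ℝ)) (hS : MeasurableSet S) (a : ℝ) :
    MeasurableSet {w : Fin n → ℝ | (Matrix.vecCons a w) ∈ S} := by
  have : Measurable (fun w : Fin n → ℝ => (Matrix.vecCons a w : Fin (n + 1) → ℝ)) := by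
    refine measurable_pi_iff.2 fun i => ?_
    refine Fin.cases ?_ (fun j => ?_) i
    · simp
    · simpa using measurable_pi_apply j
  exact this hS

theorem vol_one (S : Set (Fin 1 → ℝ)) : volume S = volume {r : ℝ | ![r] ∈ S} := by
  have hp := (volume_preserving_funUnique (Fin 1) ℝ).symm
  have h := hp.measure_preimage_equiv S
  have e : (MeasurableEquiv.funUnique (Fin 1) ℝ).symm ⁻¹' S = {r : ℝ | ![r] ∈ S} := ?_
  · rw [e] at h
    rw [h]
    congr!
  ext r
  simp only [Set.mem_preimage, Set.mem_ofPred_eq]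
  have : (MeasurableEquiv.funUnique (Fin 1) ℝ).symm r = ![r] := by
    ext i; fin_cases i; rfl
  rw [this]

theorem vol_five (S : Set (Fin 5 → ℝ)) (hS : MeasurableSet S) :
    volume S = ∫⁻ z : ℝ, ∫⁻ x : ℝ, ∫⁻ s : ℝ, ∫⁻ t : ℝ,
      volume {r : ℝ | ![z, x, s, t, r] ∈ S} := by
  rw [vol_succ S hS]
  refine lintegral_congr fun z => ?_
  have h1 := meas_cons S hS z
  rw [vol_succ _ h1]
  refine lintegral_congr fun x => ?_
  have h2 := meas_cons _ h1 x
  rw [vol_succ _ h2]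
  refine lintegral_congr fun s => ?_
  have h3 := meas_cons _ h2 s
  rw [vol_succ _ h3]
  refine lintegral_congr fun t => ?_
  rw [vol_one]
  rfl

theorem lint_eq (f : ℝ → ENNReal) (g : ℝ → ℝ) (a b : ℝ) (hab : a ≤ b) (hg : Continuous g)
    (h1 : ∀ x, a < x → x < b → 0 ≤ g x ∧ f x = ENNReal.ofReal (g x))
    (h2 : ∀ x, x < a → f x = 0) (h3 : ∀ x, b < x → f x = 0) :
    ∫⁻ x, f x = ENNReal.ofReal (∫ x in a..b, g x) := by
  have hae : f =ᵐ[volume] (Set.Ioo a b).indicator (fun x => ENNReal.ofReal (g x)) := by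
    have hnull : ∀ᵐ x : ℝ, x ∉ ({a, b} : Set ℝ) :=
      measure_eq_zero_iff_ae_notMem.1 ((Set.toFinite ({a, b} : Set ℝ)).measure_zero volume)
    filter_upwards [hnull] with x hx
    simp only [Set.mem_insert_iff, Set.mem_singleton_iff, not_or] at hx
    rcases lt_trichotomy x a with h | h | h
    · rw [h2 x h, Set.indicator_of_notMem]
      simp only [Set.mem_Ioo, not_and]; intro h'; linarith
    · exact absurd h hx.1
    · rcases lt_trichotomy x b with h' | h' | h'
      · rw [Set.indicator_of_mem (Set.mem_Ioo.2 ⟨h, h'⟩)]; exact (h1 x h h').2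
      · exact absurd h' hx.2
      · rw [h3 x h', Set.indicator_of_notMem]
        simp only [Set.mem_Ioo, not_and]; intro _; linarith
  rw [lintegral_congr_ae hae, lintegral_indicator measurableSet_Ioo,
    intervalIntegral.integral_of_le hab, integral_Ioc_eq_integral_Ioo,
    ofReal_integral_eq_lintegral_ofReal]
  · exact (hg.integrableOn_Icc).mono_set Set.Ioo_subset_Icc_self
  · refine (ae_restrict_iff' measurableSet_Ioo).2 (Filter.Eventually.of_forall fun x hx => ?_)
    exact (h1 x hx.1 hx.2).1

theorem int_eq (g G : ℝ → ℝ) (a b : ℝ) (hg : Continuous g) (h : ∀ x, HasDerivAt G (g x) x) :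
    ∫ x in a..b, g x = G b - G a :=
  intervalIntegral.integral_eq_sub_of_hasDerivAt (fun x _ => h x) (hg.intervalIntegrable a b)

/-- The region in standard coordinates: first-place total `z` of the loser, first-place total
`x` of another candidate, and the numbers of useful ballots. -/
def R : Set (Fin 5 → ℝ) :=
  {w | 1 / 4 < w 0 ∧ w 0 < w 1 ∧ w 0 < 1 - w 0 - w 1 ∧ (1 - w 0 - w 1) - w 0 < w 2 ∧ w 2 ≤ w 1 ∧
    w 1 - w 0 < w 3 ∧ w 3 ≤ 1 - w 0 - w 1 ∧ 1 / 2 - w 0 < w 2 + w 3 ∧ 0 ≤ w 4 ∧ w 4 ≤ w 0}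

theorem meas_R : MeasurableSet R := by
  unfold R
  simp only [Set.ofPred_and]
  repeat' first
    | exact measurableSet_lt (by fun_prop) (by fun_prop)
    | exact measurableSet_le (by fun_prop) (by fun_prop)
    | apply MeasurableSet.inter

theorem slice_t (z x s : ℝ) (hz : 1 / 4 < z) (hx : z < x) (hx' : x < 1 - 2 * z)
    (hs : (1 - z - x) - z < s) (hs' : s < x) :
    ∫⁻ t : ℝ, volume {r : ℝ | ![z, x, s, t, r] ∈ R} =
      ENNReal.ofReal (z * ((1 - z - x) - max (x - z) (1 / 2 - z - s))) := by
  rw [lint_eq _ (fun _ => z) (max (x - z) (1 / 2 - z - s)) (1 - z - x)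
    (max_le (by linarith) (by linarith)) continuous_const]
  · simp [mul_comm]
  · intro t h1 h2
    rw [max_lt_iff] at h1
    refine ⟨by linarith, ?_⟩
    have : {r : ℝ | ![z, x, s, t, r] ∈ R} = Set.Icc 0 z := by
      ext r
      simp only [R, Set.mem_ofPred_eq, Set.mem_Icc]
      constructor
      · rintro ⟨-, -, -, -, -, -, -, -, h, h'⟩; exact ⟨h, h'⟩
      · rintro ⟨h, h'⟩
        refine ⟨hz, hx, ?_, hs, hs'.le, h1.1, h2.le, ?_, h, h'⟩
        · change z < 1 - z - x; linarith
        · change 1 / 2 - z < s + t; linarith [h1.2]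
    rw [this, Real.volume_Icc, sub_zero]
  · intro t h
    convert measure_empty (μ := volume)
    refine Set.eq_empty_of_forall_notMem ?_
    rintro r ⟨-, -, -, -, -, h1, -, h2, -, -⟩
    change x - z < t at h1
    change 1 / 2 - z < s + t at h2
    rcases lt_max_iff.1 h with h | h <;> linarith
  · intro t h
    convert measure_empty (μ := volume)
    refine Set.eq_empty_of_forall_notMem ?_
    rintro r ⟨-, -, -, -, -, -, h1, -, -, -⟩
    change t ≤ 1 - z - x at h1
    linarith

theorem slice_s (z x : ℝ) (hz : 1 / 4 < z) (hx : z < x) (hx' : x < 1 - 2 * z) :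
    ∫⁻ s : ℝ, ∫⁻ t : ℝ, volume {r : ℝ | ![z, x, s, t, r] ∈ R} =
      ENNReal.ofReal (z * ((1 - 2 * x) * (2 * x + 2 * z - 1) - (2 * z - 1 / 2) ^ 2 / 2)) := by
  have hc : Continuous fun s : ℝ => z * ((1 - z - x) - max (x - z) (1 / 2 - z - s)) := by
    fun_prop
  rw [lint_eq _ (fun s => z * ((1 - z - x) - max (x - z) (1 / 2 - z - s))) ((1 - z - x) - z) x
    (by linarith) hc]
  · congr 1
    rw [← intervalIntegral.integral_add_adjacent_intervals (b := 1 / 2 - x)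
      (hc.intervalIntegrable _ _) (hc.intervalIntegrable _ _)]
    have e1 : ∫ s in ((1 - z - x) - z)..(1 / 2 - x),
        z * ((1 - z - x) - max (x - z) (1 / 2 - z - s)) =
        ∫ s in ((1 - z - x) - z)..(1 / 2 - x), z * ((1 - z - x) - (1 / 2 - z - s)) := by
      refine intervalIntegral.integral_congr fun s hs => ?_
      rw [Set.uIcc_of_le (by linarith)] at hs
      rw [max_eq_right (by linarith [hs.2])]
    have e2 : ∫ s in (1 / 2 - x)..x,
        z * ((1 - z - x) - max (x - z) (1 / 2 - z - s)) =
        ∫ s in (1 / 2 - x)..x, z * ((1 - z - x) - (x - z)) := by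
      refine intervalIntegral.integral_congr fun s hs => ?_
      rw [Set.uIcc_of_le (by linarith)] at hs
      rw [max_eq_left (by linarith [hs.1])]
    rw [e1, e2, int_eq _ (fun s => z * ((1 / 2 - x) * s + s ^ 2 / 2)) _ _ (by fun_prop),
      intervalIntegral.integral_const, smul_eq_mul]
    · ring
    · intro s
      have := (((hasDerivAt_id s).const_mul (1 / 2 - x)).add
        (((hasDerivAt_id s).pow 2).div_const 2)).const_mul z
      refine (this.congr_deriv ?_)
      simp only [id_eq, Nat.cast_ofNat, Nat.add_one_sub_one]; ring
  · intro s h1 h2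
    refine ⟨?_, slice_t z x s hz hx hx' h1 h2⟩
    refine mul_nonneg (by linarith) (sub_nonneg.2 (max_le (by linarith) (by linarith)))
  · intro s h
    have : ∀ t, volume {r : ℝ | ![z, x, s, t, r] ∈ R} = 0 := fun t => by
      convert measure_empty (μ := volume)
      refine Set.eq_empty_of_forall_notMem ?_
      rintro r ⟨-, -, -, h1, -, -, -, -, -, -⟩
      change (1 - z - x) - z < s at h1
      linarith
    simp [this]
  · intro s h
    have : ∀ t, volume {r : ℝ | ![z, x, s, t, r] ∈ R} = 0 := fun t => by
      convert measure_empty (μ := volume)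
      refine Set.eq_empty_of_forall_notMem ?_
      rintro r ⟨-, -, -, -, h1, -, -, -, -, -⟩
      change s ≤ x at h1
      linarith
    simp [this]

theorem slice_x (z : ℝ) (hz : 1 / 4 < z) (hz' : z < 1 / 3) :
    ∫⁻ x : ℝ, ∫⁻ s : ℝ, ∫⁻ t : ℝ, volume {r : ℝ | ![z, x, s, t, r] ∈ R} =
      ENNReal.ofReal (z * ((1 - 3 * z) * (-4 * z ^ 2 + 3 * z - 11 / 24))) := by
  rw [lint_eq _ (fun x => z * ((1 - 2 * x) * (2 * x + 2 * z - 1) - (2 * z - 1 / 2) ^ 2 / 2))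
    z (1 - 2 * z) (by linarith) (by fun_prop)]
  · congr 1
    rw [int_eq _ (fun x => z * (-4 / 3 * x ^ 3 + (2 - 2 * z) * x ^ 2 +
      (2 * z - 1 - (2 * z - 1 / 2) ^ 2 / 2) * x)) _ _ (by fun_prop)]
    · ring
    · intro x
      have := (((((hasDerivAt_id x).pow 3).const_mul (-4 / 3)).add
        (((hasDerivAt_id x).pow 2).const_mul (2 - 2 * z))).add
        ((hasDerivAt_id x).const_mul (2 * z - 1 - (2 * z - 1 / 2) ^ 2 / 2))).const_mul z
      refine (this.congr_deriv ?_)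
      simp only [id_eq, Nat.cast_ofNat, Nat.add_one_sub_one]; ring
  · intro x h1 h2
    refine ⟨mul_nonneg (by linarith) ?_, slice_s z x hz h1 h2⟩
    have hL : 0 ≤ 2 * z - 1 / 2 := by linarith
    have := mul_le_mul (show 2 * z - 1 / 2 ≤ 1 - 2 * x by linarith)
      (show 2 * z - 1 / 2 ≤ 2 * x + 2 * z - 1 by linarith) hL (by linarith)
    nlinarith
  · intro x h
    have : ∀ s t, volume {r : ℝ | ![z, x, s, t, r] ∈ R} = 0 := fun s t => by
      convert measure_empty (μ := volume)
      refine Set.eq_empty_of_forall_notMem ?_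
      rintro r ⟨-, h1, -, -, -, -, -, -, -, -⟩
      change z < x at h1
      linarith
    simp [this]
  · intro x h
    have : ∀ s t, volume {r : ℝ | ![z, x, s, t, r] ∈ R} = 0 := fun s t => by
      convert measure_empty (μ := volume)
      refine Set.eq_empty_of_forall_notMem ?_
      rintro r ⟨-, -, h1, -, -, -, -, -, -, -⟩
      change z < 1 - z - x at h1
      linarith
    simp [this]

theorem vol_R : volume R = ENNReal.ofReal (79 / 414720) := by
  rw [vol_five R meas_R, lint_eq _
    (fun z => z * ((1 - 3 * z) * (-4 * z ^ 2 + 3 * z - 11 / 24))) (1 / 4) (1 / 3) (by norm_num)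
    (by fun_prop)]
  · congr 1
    rw [int_eq _ (fun z => -11 / 48 * z ^ 2 + 35 / 24 * z ^ 3 - 13 / 4 * z ^ 4 + 12 / 5 * z ^ 5)
      _ _ (by fun_prop)]
    · norm_num
    · intro z
      have := (((((hasDerivAt_id z).pow 2).const_mul (-11 / 48)).add
        (((hasDerivAt_id z).pow 3).const_mul (35 / 24))).sub
        (((hasDerivAt_id z).pow 4).const_mul (13 / 4))).add
        (((hasDerivAt_id z).pow 5).const_mul (12 / 5))
      refine (this.congr_deriv ?_)
      simp only [id_eq, Nat.cast_ofNat, Nat.add_one_sub_one]; ring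
  · intro z h1 h2
    refine ⟨mul_nonneg (by linarith) (mul_nonneg (by linarith) (by nlinarith)), slice_x z h1 h2⟩
  · intro z h
    have : ∀ x s t, volume {r : ℝ | ![z, x, s, t, r] ∈ R} = 0 := fun x s t => by
      convert measure_empty (μ := volume)
      refine Set.eq_empty_of_forall_notMem ?_
      rintro r ⟨h1, -, -, -, -, -, -, -, -, -⟩
      change 1 / 4 < z at h1
      linarith
    simp [this]
  · intro z h
    have : ∀ x s t, volume {r : ℝ | ![z, x, s, t, r] ∈ R} = 0 := fun x s t => by
      convert measure_empty (μ := volume)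
      refine Set.eq_empty_of_forall_notMem ?_
      rintro r ⟨-, h1, h2, -, -, -, -, -, -, -⟩
      change z < x at h1
      change z < 1 - z - x at h2
      linarith
    simp [this]

theorem mp_affine (M : Matrix (Fin 5) (Fin 5) ℝ) (hM : |M.det| = 1) (c : Fin 5 → ℝ) :
    MeasurePreserving (fun v : Fin 5 → ℝ => M.mulVec v + c) volume volume := by
  have h0 : M.det ≠ 0 := by intro h; simp [h] at hM
  have h1 : MeasurePreserving (Matrix.toLin' M) volume volume := by
    refine ⟨(Matrix.toLin' M).continuous_of_finiteDimensional.measurable, ?_⟩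
    rw [Real.map_matrix_volume_pi_eq_smul_volume_pi h0, abs_inv, hM]
    simp
  exact (measurePreserving_add_right volume c).comp h1

theorem preim (M : Matrix (Fin 5) (Fin 5) ℝ) (hM : |M.det| = 1) (c : Fin 5 → ℝ)
    (f : (Fin 5 → ℝ) → (Fin 5 → ℝ)) (hf : ∀ v, f v = M.mulVec v + c) :
    MeasurableSet (f ⁻¹' R) ∧ volume (f ⁻¹' R) = volume R := by
  obtain rfl : f = fun v => M.mulVec v + c := funext hf
  exact ⟨(mp_affine M hM c).measurable meas_R,
    (mp_affine M hM c).measure_preimage meas_R.nullMeasurableSet⟩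

def fA (v : Fin 5 → ℝ) : Fin 5 → ℝ := ![v 0 + v 1, v 2 + v 3, v 2, v 4, v 0]
def fB (v : Fin 5 → ℝ) : Fin 5 → ℝ :=
  ![v 2 + v 3, v 0 + v 1, v 0, 1 - (v 0 + v 1 + v 2 + v 3 + v 4), v 2]
def fC (v : Fin 5 → ℝ) : Fin 5 → ℝ :=
  ![1 - (v 0 + v 1 + v 2 + v 3), v 0 + v 1, v 1, v 3, v 4]

theorem fA_preim : MeasurableSet (fA ⁻¹' R) ∧ volume (fA ⁻¹' R) = volume R := by
  refine preim !![1,1,0,0,0; 0,0,1,1,0; 0,0,1,0,0; 0,0,0,0,1; 1,0,0,0,0] ?_ 0 fA ?_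
  · simp [Matrix.det_succ_row_zero, Fin.sum_univ_succ, Fin.succAbove]
  · intro v
    ext i
    fin_cases i <;> simp [fA, Matrix.mulVec, dotProduct, Fin.sum_univ_five]

theorem fB_preim : MeasurableSet (fB ⁻¹' R) ∧ volume (fB ⁻¹' R) = volume R := by
  refine preim !![0,0,1,1,0; 1,1,0,0,0; 1,0,0,0,0; -1,-1,-1,-1,-1; 0,0,1,0,0] ?_
    ![0,0,0,1,0] fB ?_
  · simp [Matrix.det_succ_row_zero, Fin.sum_univ_succ, Fin.succAbove]
  · intro v
    ext i
    fin_cases i <;> simp [fB, Matrix.mulVec, dotProduct, Fin.sum_univ_five]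
    ring

theorem fC_preim : MeasurableSet (fC ⁻¹' R) ∧ volume (fC ⁻¹' R) = volume R := by
  refine preim !![-1,-1,-1,-1,0; 1,1,0,0,0; 0,1,0,0,0; 0,0,0,1,0; 0,0,0,0,1] ?_
    ![1,0,0,0,0] fC ?_
  · simp [Matrix.det_succ_row_zero, Fin.sum_univ_succ, Fin.succAbove]
  · intro v
    ext i
    fin_cases i <;> simp [fC, Matrix.mulVec, dotProduct, Fin.sum_univ_five]
    ring

theorem mem_T (v : Fin 5 → ℝ) : v ∈ T ↔ (0 ≤ v 0 ∧ 0 ≤ v 1 ∧ 0 ≤ v 2 ∧ 0 ≤ v 3 ∧ 0 ≤ v 4) ∧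
    v 0 + v 1 + v 2 + v 3 + v 4 ≤ 1 := by
  have : v ∈ T ↔ (∀ i, 0 ≤ v i) ∧ v 0 + v 1 + v 2 + v 3 + v 4 ≤ 1 := Iff.rfl
  rw [this]
  refine and_congr_left fun _ => ⟨fun h => ⟨h 0, h 1, h 2, h 3, h 4⟩, ?_⟩
  rintro ⟨h0, h1, h2, h3, h4⟩ i
  fin_cases i <;> assumption

theorem mem_A (v : Fin 5 → ℝ) :
    (v ∈ T ∧ strictlySmallest Cand.A (profOf v) ∧ paradox Cand.A (profOf v)) ↔ v ∈ fA ⁻¹' R := by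
  have hR : v ∈ fA ⁻¹' R ↔ (1 / 4 < v 0 + v 1 ∧ v 0 + v 1 < v 2 + v 3 ∧
    v 0 + v 1 < 1 - (v 0 + v 1) - (v 2 + v 3) ∧
    (1 - (v 0 + v 1) - (v 2 + v 3)) - (v 0 + v 1) < v 2 ∧ v 2 ≤ v 2 + v 3 ∧
    v 2 + v 3 - (v 0 + v 1) < v 4 ∧ v 4 ≤ 1 - (v 0 + v 1) - (v 2 + v 3) ∧
    1 / 2 - (v 0 + v 1) < v 2 + v 4 ∧ 0 ≤ v 0 ∧ v 0 ≤ v 0 + v 1) := Iff.rfl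
  rw [hR, mem_T, smallest_A, paradox_swapAC]
  constructor
  · rintro ⟨⟨⟨h0, h1, h2, h3, h4⟩, h5⟩, ⟨h6, h7⟩, h⟩
    rw [paradox_C_iff] at h
    · simp only [swapAC, profOf, Profile.X, Profile.Y, Profile.Z] at *
      obtain ⟨c1, c2, c3, c4⟩ := h
      refine ⟨?_, ?_, ?_, ?_, ?_, ?_, ?_, ?_, ?_, ?_⟩ <;> linarith
    all_goals simp only [swapAC, profOf, Profile.nonneg, Profile.X, Profile.Y, Profile.Z] at *
    · refine ⟨?_, ?_, ?_, ?_, ?_, ?_⟩ <;> linarith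
    all_goals linarith
  · rintro ⟨c1, c2, c3, c4, c5, c6, c7, c8, c9, c10⟩
    rw [paradox_C_iff]
    all_goals simp only [swapAC, profOf, Profile.nonneg, Profile.X, Profile.Y, Profile.Z] at *
    · refine ⟨⟨⟨?_, ?_, ?_, ?_, ?_⟩, ?_⟩, ⟨?_, ?_⟩, ?_, ?_, ?_, ?_⟩ <;> linarith
    · refine ⟨?_, ?_, ?_, ?_, ?_, ?_⟩ <;> linarith
    all_goals linarith

theorem mem_B (v : Fin 5 → ℝ) :
    (v ∈ T ∧ strictlySmallest Cand.B (profOf v) ∧ paradox Cand.B (profOf v)) ↔ v ∈ fB ⁻¹' R := by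
  have hR : v ∈ fB ⁻¹' R ↔ (1 / 4 < v 2 + v 3 ∧ v 2 + v 3 < v 0 + v 1 ∧
    v 2 + v 3 < 1 - (v 2 + v 3) - (v 0 + v 1) ∧
    (1 - (v 2 + v 3) - (v 0 + v 1)) - (v 2 + v 3) < v 0 ∧ v 0 ≤ v 0 + v 1 ∧
    v 0 + v 1 - (v 2 + v 3) < 1 - (v 0 + v 1 + v 2 + v 3 + v 4) ∧
    1 - (v 0 + v 1 + v 2 + v 3 + v 4) ≤ 1 - (v 2 + v 3) - (v 0 + v 1) ∧
    1 / 2 - (v 2 + v 3) < v 0 + (1 - (v 0 + v 1 + v 2 + v 3 + v 4)) ∧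
    0 ≤ v 2 ∧ v 2 ≤ v 2 + v 3) := Iff.rfl
  rw [hR, mem_T, smallest_B, paradox_swapBC]
  constructor
  · rintro ⟨⟨⟨h0, h1, h2, h3, h4⟩, h5⟩, ⟨h6, h7⟩, h⟩
    rw [paradox_C_iff] at h
    · simp only [swapBC, profOf, Profile.X, Profile.Y, Profile.Z] at *
      obtain ⟨c1, c2, c3, c4⟩ := h
      refine ⟨?_, ?_, ?_, ?_, ?_, ?_, ?_, ?_, ?_, ?_⟩ <;> linarith
    all_goals simp only [swapBC, profOf, Profile.nonneg, Profile.X, Profile.Y, Profile.Z] at *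
    · refine ⟨?_, ?_, ?_, ?_, ?_, ?_⟩ <;> linarith
    all_goals linarith
  · rintro ⟨c1, c2, c3, c4, c5, c6, c7, c8, c9, c10⟩
    rw [paradox_C_iff]
    all_goals simp only [swapBC, profOf, Profile.nonneg, Profile.X, Profile.Y, Profile.Z] at *
    · refine ⟨⟨⟨?_, ?_, ?_, ?_, ?_⟩, ?_⟩, ⟨?_, ?_⟩, ?_, ?_, ?_, ?_⟩ <;> linarith
    · refine ⟨?_, ?_, ?_, ?_, ?_, ?_⟩ <;> linarith
    all_goals linarith

theorem mem_C (v : Fin 5 → ℝ) :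
    (v ∈ T ∧ strictlySmallest Cand.C (profOf v) ∧ paradox Cand.C (profOf v)) ↔ v ∈ fC ⁻¹' R := by
  have hR : v ∈ fC ⁻¹' R ↔ (1 / 4 < 1 - (v 0 + v 1 + v 2 + v 3) ∧
    1 - (v 0 + v 1 + v 2 + v 3) < v 0 + v 1 ∧
    1 - (v 0 + v 1 + v 2 + v 3) < 1 - (1 - (v 0 + v 1 + v 2 + v 3)) - (v 0 + v 1) ∧
    (1 - (1 - (v 0 + v 1 + v 2 + v 3)) - (v 0 + v 1)) - (1 - (v 0 + v 1 + v 2 + v 3)) < v 1 ∧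
    v 1 ≤ v 0 + v 1 ∧
    v 0 + v 1 - (1 - (v 0 + v 1 + v 2 + v 3)) < v 3 ∧
    v 3 ≤ 1 - (1 - (v 0 + v 1 + v 2 + v 3)) - (v 0 + v 1) ∧
    1 / 2 - (1 - (v 0 + v 1 + v 2 + v 3)) < v 1 + v 3 ∧
    0 ≤ v 4 ∧ v 4 ≤ 1 - (v 0 + v 1 + v 2 + v 3)) := Iff.rfl
  rw [hR, mem_T, smallest_C]
  constructor
  · rintro ⟨⟨⟨h0, h1, h2, h3, h4⟩, h5⟩, ⟨h6, h7⟩, h⟩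
    rw [paradox_C_iff] at h
    · simp only [profOf, Profile.X, Profile.Y, Profile.Z] at *
      obtain ⟨c1, c2, c3, c4⟩ := h
      refine ⟨?_, ?_, ?_, ?_, ?_, ?_, ?_, ?_, ?_, ?_⟩ <;> linarith
    all_goals simp only [profOf, Profile.nonneg, Profile.X, Profile.Y, Profile.Z] at *
    · refine ⟨?_, ?_, ?_, ?_, ?_, ?_⟩ <;> linarith
    all_goals linarith
  · rintro ⟨c1, c2, c3, c4, c5, c6, c7, c8, c9, c10⟩
    rw [paradox_C_iff]
    all_goals simp only [profOf, Profile.nonneg, Profile.X, Profile.Y, Profile.Z] at *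
    · refine ⟨⟨⟨?_, ?_, ?_, ?_, ?_⟩, ?_⟩, ⟨?_, ?_⟩, ?_, ?_, ?_, ?_⟩ <;> linarith
    · refine ⟨?_, ?_, ?_, ?_, ?_, ?_⟩ <;> linarith
    all_goals linarith

theorem union_eq :
    {v ∈ T | ∃ W : Cand, strictlySmallest W (profOf v) ∧ paradox W (profOf v)} =
      fA ⁻¹' R ∪ (fB ⁻¹' R ∪ fC ⁻¹' R) := by
  ext v
  rw [Set.mem_union, Set.mem_union, ← mem_A, ← mem_B, ← mem_C]
  constructor
  · rintro ⟨hT, W, h⟩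
    cases W
    · exact Or.inl ⟨hT, h⟩
    · exact Or.inr (Or.inl ⟨hT, h⟩)
    · exact Or.inr (Or.inr ⟨hT, h⟩)
  · rintro (⟨hT, h⟩ | ⟨hT, h⟩ | ⟨hT, h⟩)
    · exact ⟨hT, _, h⟩
    · exact ⟨hT, _, h⟩
    · exact ⟨hT, _, h⟩

theorem stmt17 :
    MeasureTheory.volume
      {v ∈ T | ∃ W : Cand, strictlySmallest W (profOf v) ∧ paradox W (profOf v)} =
      (79 / 1152) * (1 / 120 : ENNReal) := by
  rw [union_eq, measure_union _ (fB_preim.1.union fC_preim.1), measure_union _ fC_preim.1,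
    fA_preim.2, fB_preim.2, fC_preim.2, vol_R, ← ENNReal.ofReal_add (by norm_num) (by norm_num),
    ← ENNReal.ofReal_add (by norm_num) (by norm_num)]
  · have h1 : (79 / 1152 : ENNReal) = ENNReal.ofReal (79 / 1152) := by
      rw [ENNReal.ofReal_div_of_pos (by norm_num)]; norm_num
    have h2 : (1 / 120 : ENNReal) = ENNReal.ofReal (1 / 120) := by
      rw [ENNReal.ofReal_div_of_pos (by norm_num)]; norm_num
    rw [h1, h2, ← ENNReal.ofReal_mul (by norm_num)]
    norm_num
  · rw [Set.disjoint_left]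
    intro v hB hC
    rw [← mem_B, smallest_B] at hB
    rw [← mem_C, smallest_C] at hC
    linarith [hB.2.1.2, hC.2.1.2]
  · rw [Set.disjoint_left]
    intro v hA hBC
    rw [← mem_A, smallest_A] at hA
    rcases hBC with hB | hC
    · rw [← mem_B, smallest_B] at hB
      linarith [hA.2.1.1, hB.2.1.1]
    · rw [← mem_C, smallest_C] at hC
      linarith [hA.2.1.2, hC.2.1.1]
end
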